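/- Let k be a field of characteristic p, and let m be an integer with p > m > 2. Let a_{-m}, a_{-m+1}, ..., a_{-2} be elements of k with a_{-m} ≠ 0. Then there exist alpha_2, ..., alpha_{m-1} in k such that, setting t_1 = t + alpha_2 t^2 + ... + alpha_{m-1} t^{m-1} in k[t], for every ell with 1 ≤ ell ≤ m-2 the following holds: writing t_1^ell = sum_j c_{ell,j} t^j, one has a_{-1-ell} c_{ell,ell} + a_{-2-ell} c_{ell,ell+1} + ... + a_{-m} c_{ell,m-1} = 0. (Equivalently: for each 1 ≤ ell ≤ m-2, the coefficient of t^{-1} in z * t_1^ell vanishes, where z = sum_{i=-m}^{-2} a_i t^i, so that the additive character psi_z is trivial on k*t_1^ell.) -/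

import Mathlib

/-!
The conditions form a triangular system, solved for `α 2, α 3, …, α (m - 1)` in this order, using
the condition for `ℓ = m - i` to determine `α i`. Adding `c` to `α i` replaces `t₁` by
`t₁ + c t ^ i`. Since `t₁ = t (1 + ⋯)`, this leaves the coefficients of `t₁ ^ ℓ` in degrees below
`ℓ + i - 1` unchanged and adds `ℓ c` to the coefficient in degree `ℓ + i - 1`
(`coeff_pow_perturb`). Only degrees up to `m - 1` enter the conditions, so those with `ℓ > m - i`
are unaffected, while the left-hand side of the one with `ℓ = m - i` changes by `A m * ℓ * c`.
As `A m ≠ 0` and `0 < ℓ < p`, some `c` makes it vanish.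
-/

open Polynomial in
/-- First-order effect on the low coefficients of `(X * g) ^ ℓ`, where `g` has constant term `1`,
of adding a monomial of degree `d + 1 ≥ 2` to `X * g`. -/
lemma coeff_pow_perturb {k : Type*} [Field k] (g : k[X]) (hg : g.coeff 0 = 1) (c : k)
    (d : ℕ) (hd : 1 ≤ d) (ℓ e : ℕ) (he : e ≤ d) :
    ((X * g + C c * X ^ (d + 1)) ^ ℓ).coeff (ℓ + e)
      = ((X * g) ^ ℓ).coeff (ℓ + e) + if e = d then (ℓ : k) * c else 0 := by
  have hfac : X * g + C c * X ^ (d + 1) = X * (g + C c * X ^ d) := by ring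
  rw [hfac, mul_pow, mul_pow, add_comm ℓ e, coeff_X_pow_mul, coeff_X_pow_mul]
  obtain ⟨K, hK⟩ := Polynomial.powAddExpansion g (C c * X ^ d) ℓ
  have hrest : (K * (C c * X ^ d) ^ 2).coeff e = 0 := by
    have h : K * (C c * X ^ d) ^ 2 = (K * C c ^ 2) * X ^ (2 * d) := by ring
    rw [h, coeff_mul_X_pow', if_neg (by omega)]
  have hlin : ((ℓ : k[X]) * g ^ (ℓ - 1) * (C c * X ^ d)).coeff e
      = if e = d then (ℓ : k) * c else 0 := by
    have h : (ℓ : k[X]) * g ^ (ℓ - 1) * (C c * X ^ d)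
        = (C ((ℓ : k) * c) * g ^ (ℓ - 1)) * X ^ d := by
      rw [C_mul, ← C_eq_natCast]; simp only [map_natCast]; ring
    rw [h, coeff_mul_X_pow']
    by_cases hed : e = d
    · subst hed
      simp only [le_refl, if_true, Nat.sub_self, coeff_C_mul]
      rw [coeff_zero_eq_eval_zero, eval_pow, ← coeff_zero_eq_eval_zero, hg, one_pow, mul_one]
    · rw [if_neg (by omega), if_neg hed]
  rw [hK, coeff_add, coeff_add, hrest, hlin, add_zero]

open Polynomial in
lemma exists_eq_X_mul {k : Type*} [Field k] (m : ℕ) (α : ℕ → k) :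
    ∃ g : k[X], g.coeff 0 = 1 ∧
      X + ∑ i ∈ Finset.Icc 2 (m - 1), C (α i) * X ^ i = X * g := by
  refine ⟨1 + ∑ i ∈ Finset.Icc 2 (m - 1), C (α i) * X ^ (i - 1), ?_, ?_⟩
  · rw [coeff_add, coeff_one_zero, finsetSum_coeff, Finset.sum_eq_zero, add_zero]
    intro i hi
    have := (Finset.mem_Icc.mp hi).1
    rw [coeff_C_mul, coeff_X_pow, if_neg (by omega), mul_zero]
  · rw [mul_add, mul_one, Finset.mul_sum]
    congr 1
    refine Finset.sum_congr rfl fun i hi => ?_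
    obtain ⟨n, rfl⟩ := Nat.exists_eq_add_of_le' (Finset.mem_Icc.mp hi).1
    rw [show n + 2 - 1 = n + 1 by omega]
    ring

/-- Lemma 4.3 of the paper, with `A j` denoting `a_{-j}`.  Given a field `k` of
characteristic `p` with `p > m > 2` and elements `a_{-m}, …, a_{-2}` with `a_{-m} ≠ 0`,
there is a reparameterization `t₁ = t + α₂ t² + ⋯ + α_{m-1} t^{m-1}` such that for each
`1 ≤ ℓ ≤ m-2` the combination `∑_{j=ℓ}^{m-1} a_{-1-j} · (coefficient of t^j in t₁^ℓ)`
vanishes. -/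
theorem stmt2 (k : Type*) [Field k] (p : ℕ) [CharP k p] (m : ℕ)
    (hm : 2 < m) (hp : m < p) (A : ℕ → k) (hA : A m ≠ 0) :
    ∃ α : ℕ → k,
      ∀ ℓ ∈ Finset.Icc 1 (m - 2),
        ∑ j ∈ Finset.Icc ℓ (m - 1),
          A (j + 1) *
            (((Polynomial.X + ∑ i ∈ Finset.Icc 2 (m - 1),
                Polynomial.C (α i) * Polynomial.X ^ i : Polynomial k)) ^ ℓ).coeff j = 0 := by
  -- After choosing `α 2, …, α (s + 1)`, the conditions for `m - 1 - s ≤ ℓ ≤ m - 2` hold.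
  suffices H : ∀ s ≤ m - 2, ∃ α : ℕ → k,
      ∀ ℓ ∈ Finset.Icc (m - 1 - s) (m - 2),
        ∑ j ∈ Finset.Icc ℓ (m - 1),
          A (j + 1) *
            (((Polynomial.X + ∑ i ∈ Finset.Icc 2 (m - 1),
                Polynomial.C (α i) * Polynomial.X ^ i : Polynomial k)) ^ ℓ).coeff j = 0 by
    have h := H (m - 2) le_rfl
    rwa [show m - 1 - (m - 2) = 1 by omega] at h
  intro s
  induction s with
  | zero =>
    intro _
    refine ⟨0, fun ℓ hℓ => ?_⟩
    rw [Finset.mem_Icc] at hℓ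
    omega
  | succ s ih =>
    intro hs
    obtain ⟨α, hα⟩ := ih (by omega)
    obtain ⟨g, hg, hf⟩ := exists_eq_X_mul m α
    rw [hf] at hα
    -- The index whose condition determines `α (s + 2)`.
    obtain ⟨L, hL⟩ : ∃ L, L = m - 2 - s := ⟨_, rfl⟩
    have hLk : (L : k) ≠ 0 := by
      rw [Ne, CharP.cast_eq_zero_iff k p]
      exact fun h => absurd (Nat.le_of_dvd (by omega) h) (by omega)
    obtain ⟨c, hc⟩ : ∃ c : k, (∑ j ∈ Finset.Icc L (m - 1),
        A (j + 1) * ((Polynomial.X * g) ^ L).coeff j) + A m * (L * c) = 0 := by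
      refine ⟨-(∑ j ∈ Finset.Icc L (m - 1),
        A (j + 1) * ((Polynomial.X * g) ^ L).coeff j) / (A m * L), ?_⟩
      field_simp
      ring
    refine ⟨fun i => α i + if i = s + 2 then c else 0, fun ℓ hℓ => ?_⟩
    have hf' : (Polynomial.X + ∑ i ∈ Finset.Icc 2 (m - 1),
        Polynomial.C (α i + if i = s + 2 then c else 0) * Polynomial.X ^ i : Polynomial k)
        = Polynomial.X * g + Polynomial.C c * Polynomial.X ^ (s + 1 + 1) := by
      rw [← hf, add_assoc]
      congr 1
      simp only [Polynomial.C_add, add_mul, Finset.sum_add_distrib]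
      congr 1
      rw [Finset.sum_eq_single_of_mem (s + 2) (Finset.mem_Icc.mpr (by omega))]
      · simp
      · intro i _ hi
        simp [hi]
    rw [hf']
    rw [Finset.mem_Icc] at hℓ
    have hcoeff : ∀ j ∈ Finset.Icc ℓ (m - 1),
        A (j + 1) * ((Polynomial.X * g
          + Polynomial.C c * Polynomial.X ^ (s + 1 + 1)) ^ ℓ).coeff j
        = A (j + 1) * ((Polynomial.X * g) ^ ℓ).coeff j
          + if j = ℓ + (s + 1) then A (j + 1) * (ℓ * c) else 0 := by
      intro j hj
      rw [Finset.mem_Icc] at hj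
      obtain ⟨e, rfl⟩ := Nat.exists_eq_add_of_le hj.1
      rw [coeff_pow_perturb g hg c (s + 1) (by omega) ℓ e (by omega), mul_add, mul_ite, mul_zero]
      simp only [Nat.add_left_cancel_iff]
    rw [Finset.sum_congr rfl hcoeff, Finset.sum_add_distrib, Finset.sum_ite_eq']
    by_cases hℓL : ℓ = L
    · subst hℓL
      rw [if_pos (Finset.mem_Icc.mpr (by omega)), show ℓ + (s + 1) + 1 = m by omega]
      exact hc
    · rw [if_neg (by rw [Finset.mem_Icc]; omega), add_zero]
      exact hα ℓ (Finset.mem_Icc.mpr (by omega))
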